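/- Assume m u∞² > γRT∞. Then c∞ > 1, f(1) = 0 and f(c∞) < 0, f(n) → +∞ as n → 0⁺, and the restriction of f to the interval (0, c∞] is a strictly decreasing bijection from (0, c∞] onto [f(c∞), ∞). -/

import Mathlib

open Real Set Filter

/-!
The derivative of `f` factors as `f'(x) = x⁻³ (γRT∞ x^(γ+1) - m u∞²)`, which is negative exactly
below `c∞`, so `f` strictly decreases on `(0, c∞]`. Near `0` the term `x⁻²` dominates and `f` blows
up, and the intermediate value theorem makes the decreasing restriction a bijection. The same
argument works for two arbitrary competing powers `x ^ p` and `x ^ (-q)` with `-q < p`.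
-/

open scoped Topology

theorem bijOn_Ioc_Ici_of_strictAntiOn {α β : Type*}
    [ConditionallyCompleteLinearOrder α] [TopologicalSpace α] [OrderTopology α] [DenselyOrdered α]
    [LinearOrder β] [TopologicalSpace β] [OrderClosedTopology β]
    {f : α → β} {a b : α} (hab : a < b) (hanti : StrictAntiOn f (Ioc a b))
    (hcont : ContinuousOn f (Ioc a b)) (hlim : Tendsto f (𝓝[>] a) atTop) :
    BijOn f (Ioc a b) (Ici (f b)) := by
  have hb : b ∈ Ioc a b := right_mem_Ioc.2 hab
  have : (𝓝[>] a).NeBot := nhdsGT_neBot_of_exists_gt ⟨b, hab⟩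
  exact ⟨fun _ hx => hanti.antitoneOn hx hb hx.2, hanti.injOn,
    isPreconnected_Ioc.intermediate_value_Ici hb (le_principal_iff.2 (Ioc_mem_nhdsGT hab))
      hcont hlim⟩

section SagdeevPotential

/-- The Sagdeev function for two competing powers `x ^ p` and `x ^ (-q)`, normalised to vanish at
`1`. The function of the paper has `a = γRT∞`, `b = m u∞²`, `p = γ - 1` and `q = 2`. -/
noncomputable def sagdeevPotential (a b p q x : ℝ) : ℝ :=
  a / p * (x ^ p - 1) + b / q * (x ^ (-q) - 1)

/-- The positive solution `x` of `a * x ^ (p + q) = b`, at which the derivative of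
`sagdeevPotential a b p q` vanishes. It is the `c∞` of the paper. -/
noncomputable def sagdeevCriticalPoint (a b p q : ℝ) : ℝ :=
  (b / a) ^ (p + q)⁻¹

variable {a b p q x : ℝ}

theorem one_lt_sagdeevCriticalPoint (ha : 0 < a) (hab : a < b) (hpq : 0 < p + q) :
    1 < sagdeevCriticalPoint a b p q :=
  one_lt_rpow ((one_lt_div ha).2 hab) (inv_pos.2 hpq)

theorem lt_sagdeevCriticalPoint_iff (ha : 0 < a) (hb : 0 ≤ b) (hpq : 0 < p + q) (hx : 0 ≤ x) :
    x < sagdeevCriticalPoint a b p q ↔ a * x ^ (p + q) < b := by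
  rw [sagdeevCriticalPoint, lt_rpow_inv_iff_of_pos hx (div_nonneg hb ha.le) hpq, lt_div_iff₀' ha]

@[simp]
theorem sagdeevPotential_one : sagdeevPotential a b p q 1 = 0 := by
  simp [sagdeevPotential]

theorem hasDerivAt_sagdeevPotential (hp : p ≠ 0) (hq : q ≠ 0) (hx : 0 < x) :
    HasDerivAt (sagdeevPotential a b p q) (x ^ (-q - 1) * (a * x ^ (p + q) - b)) x := by
  have hpow (r : ℝ) : HasDerivAt (fun y : ℝ => y ^ r - 1) (r * x ^ (r - 1)) x :=
    (hasDerivAt_rpow_const (.inl hx.ne')).sub_const 1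
  have hfactor : x ^ (p - 1) = x ^ (-q - 1) * x ^ (p + q) := by
    rw [← rpow_add hx]
    ring_nf
  refine (((hpow p).const_mul (a / p)).add ((hpow (-q)).const_mul (b / q))).congr_deriv ?_
  rw [hfactor]
  field_simp
  ring

theorem continuousOn_sagdeevPotential (hp : p ≠ 0) (hq : q ≠ 0) :
    ContinuousOn (sagdeevPotential a b p q) (Ioi 0) :=
  fun _ hx => (hasDerivAt_sagdeevPotential hp hq hx).continuousAt.continuousWithinAt

theorem strictAntiOn_sagdeevPotential (ha : 0 < a) (hb : 0 ≤ b) (hp : p ≠ 0) (hq : q ≠ 0)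
    (hpq : 0 < p + q) :
    StrictAntiOn (sagdeevPotential a b p q) (Ioc 0 (sagdeevCriticalPoint a b p q)) := by
  refine strictAntiOn_of_deriv_neg (convex_Ioc _ _)
    ((continuousOn_sagdeevPotential hp hq).mono Ioc_subset_Ioi_self) fun x hx => ?_
  rw [interior_Ioc] at hx
  rw [(hasDerivAt_sagdeevPotential hp hq hx.1).deriv]
  have hlt : a * x ^ (p + q) < b := (lt_sagdeevCriticalPoint_iff ha hb hpq hx.1.le).1 hx.2
  exact mul_neg_of_pos_of_neg (rpow_pos_of_pos hx.1 _) (sub_neg.2 hlt)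

theorem tendsto_sagdeevPotential_nhdsGT_zero (hb : 0 < b) (hq : 0 < q) (hpq : 0 < p + q) :
    Tendsto (sagdeevPotential a b p q) (𝓝[>] 0) atTop := by
  have hpow : Tendsto (fun x : ℝ => x ^ (p + q)) (𝓝[>] 0) (𝓝 0) := by
    simpa only [zero_rpow hpq.ne'] using
      ((continuousAt_rpow_const 0 (p + q) (.inr hpq.le)).tendsto.mono_left nhdsWithin_le_nhds)
  have hcoeff : Tendsto (fun x : ℝ => a / p * x ^ (p + q) + b / q) (𝓝[>] 0) (𝓝 (b / q)) := by
    simpa only [mul_zero, zero_add] using (hpow.const_mul (a / p)).add_const (b / q)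
  have hprod : Tendsto (fun x : ℝ => x ^ (-q) * (a / p * x ^ (p + q) + b / q)) (𝓝[>] 0) atTop :=
    (tendsto_rpow_neg_nhdsGT_zero (neg_lt_zero.2 hq)).atTop_mul_pos (div_pos hb hq) hcoeff
  refine (tendsto_atTop_add_const_right _ (-(a / p) - b / q) hprod).congr' ?_
  filter_upwards [self_mem_nhdsWithin] with x hx
  have hfactor : x ^ p = x ^ (-q) * x ^ (p + q) := by
    rw [← rpow_add hx]
    ring_nf
  rw [sagdeevPotential, hfactor]
  ring

theorem sagdeev_supersonic_properties_general (ha : 0 < a) (hab : a < b) (hp : p ≠ 0) (hq : 0 < q)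
    (hpq : 0 < p + q) :
    1 < sagdeevCriticalPoint a b p q ∧
    sagdeevPotential a b p q 1 = 0 ∧
    sagdeevPotential a b p q (sagdeevCriticalPoint a b p q) < 0 ∧
    Tendsto (sagdeevPotential a b p q) (𝓝[>] 0) atTop ∧
    StrictAntiOn (sagdeevPotential a b p q) (Ioc 0 (sagdeevCriticalPoint a b p q)) ∧
    BijOn (sagdeevPotential a b p q) (Ioc 0 (sagdeevCriticalPoint a b p q))
      (Ici (sagdeevPotential a b p q (sagdeevCriticalPoint a b p q))) := by
  have hb : 0 < b := ha.trans hab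
  have hc : 1 < sagdeevCriticalPoint a b p q := one_lt_sagdeevCriticalPoint ha hab hpq
  have hc₀ : 0 < sagdeevCriticalPoint a b p q := one_pos.trans hc
  have hanti := strictAntiOn_sagdeevPotential ha hb.le hp hq.ne' hpq
  have hlim : Tendsto (sagdeevPotential a b p q) (𝓝[>] 0) atTop :=
    tendsto_sagdeevPotential_nhdsGT_zero hb hq hpq
  have hneg : sagdeevPotential a b p q (sagdeevCriticalPoint a b p q) < 0 := by
    simpa only [sagdeevPotential_one] using hanti ⟨one_pos, hc.le⟩ (right_mem_Ioc.2 hc₀) hc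
  exact ⟨hc, sagdeevPotential_one, hneg, hlim, hanti, bijOn_Ioc_Ici_of_strictAntiOn hc₀ hanti
    ((continuousOn_sagdeevPotential hp hq.ne').mono Ioc_subset_Ioi_self) hlim⟩

end SagdeevPotential

/-- Assume `m u∞² > γRT∞`. Then `c∞ > 1`, `f(1) = 0`, `f(c∞) < 0`, `f(n) → +∞` as
`n → 0⁺`, and the restriction of `f` to `(0, c∞]` is a strictly decreasing bijection
from `(0, c∞]` onto `[f(c∞), ∞)`. -/
theorem sagdeev_supersonic_properties
    (γ R Tinf m uinf : ℝ) (hγ : 1 < γ) (hR : 0 < R) (hT : 0 < Tinf) (hm : 0 < m)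
    (hu : uinf < 0)
    (f : ℝ → ℝ)
    (hf : ∀ n : ℝ, f n =
      (γ * R * Tinf / (γ - 1)) * (n ^ (γ - 1) - 1)
        + (m * uinf ^ 2 / 2) * (n ^ (-2 : ℝ) - 1))
    (cinf : ℝ) (hc : cinf = (m * uinf ^ 2 / (γ * R * Tinf)) ^ ((1 : ℝ) / (γ + 1)))
    (hsup : γ * R * Tinf < m * uinf ^ 2) :
    1 < cinf ∧
    f 1 = 0 ∧
    f cinf < 0 ∧
    Tendsto f (nhdsWithin 0 (Ioi 0)) atTop ∧
    StrictAntiOn f (Ioc 0 cinf) ∧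
    BijOn f (Ioc 0 cinf) (Ici (f cinf)) := by
  obtain rfl : f = sagdeevPotential (γ * R * Tinf) (m * uinf ^ 2) (γ - 1) 2 := funext hf
  obtain rfl : cinf = sagdeevCriticalPoint (γ * R * Tinf) (m * uinf ^ 2) (γ - 1) 2 := by
    rw [hc, sagdeevCriticalPoint, one_div]
    ring_nf
  exact sagdeev_supersonic_properties_general (by positivity) hsup (by linarith) two_pos
    (by linarith)
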